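/- (Remark 2, unbounded vorticity growth.) Fix t₀ ∈ ℝ and ω₀ ∈ ℝ³. Let A : [t₀, ∞) → GL(3, ℝ) with A(t₀) = Id, and for each t let λ₃(t) be the largest eigenvalue of A(t)ᵀA(t) with unit eigenvector ξ₃(t). Assume (1/(2(t−t₀))) log λ₃(t) → μ₃⁺ with 0 < μ₃⁺ < ∞ and ξ₃(t) → ζ₃⁺ as t → ∞. If ⟨ω₀, ζ₃⁺⟩ ≠ 0, then |A(t) ω₀| → ∞ as t → ∞. Consequently, in an inviscid flow with bounded vorticity along such a trajectory, the evolving vorticity ω(t) = A(t)ω₀ cannot align with the dominant left singular vector η₃(t); it must satisfy ⟨ω₀, ζ₃⁺⟩ = 0. -/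

import Mathlib

open scoped RealInnerProductSpace
open Matrix MeasureTheory Filter

/-- Action of a 3×3 real matrix on `ℝ³` with the Euclidean inner product. -/
noncomputable def mulE (A : Matrix (Fin 3) (Fin 3) ℝ) (x : EuclideanSpace ℝ (Fin 3)) :
    EuclideanSpace ℝ (Fin 3) :=
  Matrix.toEuclideanLin A x

/-!
If `ξ` is an eigenvector of `T*T` with eigenvalue `lam ≥ 0`, then `⟪T x, T ξ⟫ = lam ⟪x, ξ⟫` and
`‖T ξ‖ = √lam ‖ξ‖`, so Cauchy–Schwarz gives `√lam |⟪x, ξ⟫| ≤ ‖T x‖ ‖ξ‖`. A positive exponent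
forces `lam → ∞`, while `⟪x, ξ⟫` tends to the nonzero number `⟪x, ζ⟫`.
-/

theorem tendsto_atTop_of_tendsto_log_div {ι : Type*} {l : Filter ι} {f g : ι → ℝ} {c : ℝ}
    (hf : ∀ᶠ i in l, 0 ≤ f i) (hg : Tendsto g l atTop) (hc : 0 < c)
    (h : Tendsto (fun i => Real.log (f i) / g i) l (nhds c)) : Tendsto f l atTop :=
  tendsto_atTop_mono' l (hf.mono fun _ => Real.log_le_self) (hg.num hc h)

section

variable {𝕜 E F : Type*} [RCLike 𝕜]
  [NormedAddCommGroup E] [InnerProductSpace 𝕜 E] [NormedAddCommGroup F] [InnerProductSpace 𝕜 F]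

/-- `T*T ξ = lam • ξ`, i.e. `ξ` satisfies the eigenvector equation of the Cauchy–Green operator of
`T`. The equation is tested against every vector, so that `T` needs no adjoint, and `ξ = 0` is
allowed. -/
def IsCauchyGreenEigenvector (T : E →ₗ[𝕜] F) (lam : ℝ) (ξ : E) : Prop :=
  ∀ x, inner 𝕜 (T x) (T ξ) = lam * inner 𝕜 x ξ

namespace IsCauchyGreenEigenvector

variable {T : E →ₗ[𝕜] F} {lam : ℝ} {ξ : E}

theorem norm_map_sq (h : IsCauchyGreenEigenvector T lam ξ) : ‖T ξ‖ ^ 2 = lam * ‖ξ‖ ^ 2 := by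
  have hξ := h ξ
  rw [inner_self_eq_norm_sq_to_K, inner_self_eq_norm_sq_to_K] at hξ
  exact_mod_cast hξ

theorem eigenvalue_nonneg (h : IsCauchyGreenEigenvector T lam ξ) (hξ : ξ ≠ 0) : 0 ≤ lam :=
  nonneg_of_mul_nonneg_left (h.norm_map_sq ▸ sq_nonneg ‖T ξ‖) (by positivity)

theorem norm_map (h : IsCauchyGreenEigenvector T lam ξ) (hlam : 0 ≤ lam) :
    ‖T ξ‖ = √lam * ‖ξ‖ := by
  rw [← Real.sqrt_sq (norm_nonneg (T ξ)), h.norm_map_sq, Real.sqrt_mul hlam,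
    Real.sqrt_sq (norm_nonneg ξ)]

theorem sqrt_mul_norm_inner_le (h : IsCauchyGreenEigenvector T lam ξ) (x : E) :
    √lam * ‖inner 𝕜 x ξ‖ ≤ ‖T x‖ * ‖ξ‖ := by
  rcases le_or_gt lam 0 with hlam | hlam
  · rw [Real.sqrt_eq_zero_of_nonpos hlam, zero_mul]
    positivity
  · refine le_of_mul_le_mul_left ?_ (Real.sqrt_pos.2 hlam)
    calc √lam * (√lam * ‖inner 𝕜 x ξ‖)
        = ‖inner 𝕜 (T x) (T ξ)‖ := by
          rw [← mul_assoc, Real.mul_self_sqrt hlam.le, h x, norm_mul,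
            RCLike.norm_of_nonneg hlam.le]
      _ ≤ ‖T x‖ * ‖T ξ‖ := norm_inner_le_norm _ _
      _ = √lam * (‖T x‖ * ‖ξ‖) := by rw [h.norm_map hlam.le]; ring

end IsCauchyGreenEigenvector

theorem isCauchyGreenEigenvector_toEuclideanLin {m n : Type*} [Fintype m] [Fintype n]
    [DecidableEq n] {A : Matrix m n 𝕜} {lam : ℝ} {ξ : EuclideanSpace 𝕜 n}
    (h : toEuclideanLin (Aᴴ * A) ξ = (lam : 𝕜) • ξ) :
    IsCauchyGreenEigenvector (toEuclideanLin A) lam ξ := by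
  classical
  intro x
  rw [← LinearMap.adjoint_inner_right, ← toEuclideanLin_conjTranspose_eq_adjoint,
    ← LinearMap.comp_apply, ← toLpLin_mul_same, h, inner_smul_right]

theorem tendsto_norm_apply_atTop_of_eigenvalue {ι : Type*} {l : Filter ι} {T : ι → E →ₗ[𝕜] F}
    {lam : ι → ℝ} {ξ : ι → E} {ζ x : E}
    (heig : ∀ᶠ i in l, IsCauchyGreenEigenvector (T i) (lam i) (ξ i))
    (hlam : Tendsto lam l atTop) (hξ : Tendsto ξ l (nhds ζ)) (hx : inner 𝕜 x ζ ≠ 0) :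
    Tendsto (fun i => ‖T i x‖) l atTop := by
  have hζ : ζ ≠ 0 := by rintro rfl; exact hx (inner_zero_right _)
  have hproj : Tendsto (fun i => ‖inner 𝕜 x (ξ i)‖ / ‖ξ i‖) l (nhds (‖inner 𝕜 x ζ‖ / ‖ζ‖)) :=
    (tendsto_const_nhds.inner hξ).norm.div hξ.norm (norm_ne_zero_iff.2 hζ)
  have hlower : Tendsto (fun i => √(lam i) * (‖inner 𝕜 x (ξ i)‖ / ‖ξ i‖)) l atTop :=
    (Real.tendsto_sqrt_atTop.comp hlam).atTop_mul_pos (by positivity) hproj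
  refine tendsto_atTop_mono' l ?_ hlower
  filter_upwards [heig] with i hi
  rw [← mul_div_assoc]
  exact div_le_of_le_mul₀ (norm_nonneg _) (norm_nonneg _) (hi.sqrt_mul_norm_inner_le x)

theorem stmt_6_general (t₀ : ℝ) (ω₀ : E) (T : ℝ → E →ₗ[𝕜] F) (lam : ℝ → ℝ) (ξ : ℝ → E)
    (heig : ∀ᶠ t in atTop, IsCauchyGreenEigenvector (T t) (lam t) (ξ t))
    (μ : ℝ) (hμ : 0 < μ)
    (hLyap : Tendsto (fun t => Real.log (lam t) / (2 * (t - t₀))) atTop (nhds μ))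
    (ζ : E) (hξ : Tendsto ξ atTop (nhds ζ)) (hne : inner 𝕜 ω₀ ζ ≠ 0) :
    Tendsto (fun t => ‖T t ω₀‖) atTop atTop := by
  have hζ : ζ ≠ 0 := by rintro rfl; exact hne (inner_zero_right _)
  have htime : Tendsto (fun t : ℝ => 2 * (t - t₀)) atTop atTop :=
    (tendsto_atTop_add_const_right _ (-t₀) tendsto_id).const_mul_atTop two_pos
  -- `Real.log x = log |x|`, so `hLyap` by itself would allow `lam t → -∞`.
  have hlam_nonneg : ∀ᶠ t in atTop, 0 ≤ lam t := by
    filter_upwards [heig, hξ.eventually_ne hζ] with t ht hξt using ht.eigenvalue_nonneg hξt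
  have hlam : Tendsto lam atTop atTop :=
    tendsto_atTop_of_tendsto_log_div hlam_nonneg htime hμ hLyap
  exact tendsto_norm_apply_atTop_of_eigenvalue heig hlam hξ hne

end

/-- Remark 2, unbounded vorticity growth: if the maximal forward Lyapunov
exponent is positive, the dominant forward Lyapunov vector `ζ₃⁺` exists, and
`⟨ω₀, ζ₃⁺⟩ ≠ 0`, then `|A(t) ω₀| → ∞` as `t → ∞`. -/
theorem stmt_6 (t₀ : ℝ) (ω₀ : EuclideanSpace ℝ (Fin 3))
    (A : ℝ → Matrix (Fin 3) (Fin 3) ℝ)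
    (hAinv : ∀ t, t₀ ≤ t → IsUnit (A t)) (hA0 : A t₀ = 1)
    (lam3 : ℝ → ℝ) (xi3 : ℝ → EuclideanSpace ℝ (Fin 3))
    (hunit : ∀ t, t₀ ≤ t → ‖xi3 t‖ = 1)
    (heig : ∀ t, t₀ ≤ t → mulE ((A t)ᵀ * A t) (xi3 t) = lam3 t • xi3 t)
    (hmax : ∀ t, t₀ ≤ t → ∀ (μ : ℝ) (v : EuclideanSpace ℝ (Fin 3)), v ≠ 0 →
      mulE ((A t)ᵀ * A t) v = μ • v → μ ≤ lam3 t)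
    (μ₃ : ℝ) (hμpos : 0 < μ₃)
    (hLyap : Tendsto (fun t => Real.log (lam3 t) / (2 * (t - t₀))) atTop (nhds μ₃))
    (ζ₃ : EuclideanSpace ℝ (Fin 3)) (hvec : Tendsto xi3 atTop (nhds ζ₃))
    (hne : ⟪ω₀, ζ₃⟫ ≠ 0) :
    Tendsto (fun t => ‖mulE (A t) ω₀‖) atTop atTop := by
  refine stmt_6_general t₀ ω₀ (fun t => toEuclideanLin (A t)) lam3 xi3 ?_ μ₃ hμpos hLyap ζ₃ hvec hne
  filter_upwards [eventually_ge_atTop t₀] with t ht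
    using isCauchyGreenEigenvector_toEuclideanLin
      ((conjTranspose_eq_transpose_of_trivial (A t)).symm ▸ heig t ht)
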